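/- arXiv:1103.0247 — 2 statements merged into one kernel-verified Lean document; each statement's English description precedes it below -/
import Mathlib

section
/- Let Γ be a set, let Ω = {(γ₁,γ₂) ∈ Γ × Γ : γ₁ ≠ γ₂} be the complement of the diagonal, and let Σ be the trace of the product σ-algebra P(Γ) ⊗ P(Γ) on Ω. Then |Γ| is a Kunen cardinal if and only if Σ equals the full power set of Ω. -/
/-- The σ-algebra on `Γ × Γ` generated by all rectangles `A ×ˢ B` with `A, B ⊆ Γ`. -/
def productSigma (Γ : Type*) : MeasurableSpace (Γ × Γ) :=
  MeasurableSpace.generateFrom {S : Set (Γ × Γ) | ∃ A B : Set Γ, S = A ×ˢ B}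

/-- `|Γ|` is a Kunen cardinal. -/
def IsKunen (Γ : Type*) : Prop := productSigma Γ = ⊤

/-!
A product-measurable set `A` lies in `m.prod m` for some countably generated σ-algebra `m`. If the
trace of `A` off the diagonal is a strict linear order, then `m` separates points: points `x`, `y`
that `m` does not separate satisfy `(x, y) ∈ A ↔ (y, y) ∈ A ↔ (y, x) ∈ A`. A countable separating
family makes the diagonal measurable. Then the measurability of a set can be checked separately on
and off the diagonal, and `S ∩ diagonal Γ` is the intersection of the diagonal with the rectangle
`{x | (x, x) ∈ S} ×ˢ univ`.
-/

open MeasurableSpace Set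
open scoped MeasureTheory

theorem exists_countable_subset_measurableSet_generateFrom {α : Type*} {C : Set (Set α)}
    {s : Set α} (hs : MeasurableSet[generateFrom C] s) :
    ∃ D ⊆ C, D.Countable ∧ MeasurableSet[generateFrom D] s := by
  induction s, hs using generateFrom_induction with
  | hC t ht _ =>
    exact ⟨{t}, singleton_subset_iff.2 ht, countable_singleton t,
      measurableSet_generateFrom (mem_singleton t)⟩
  | empty => exact ⟨∅, empty_subset C, countable_empty, @MeasurableSet.empty α (generateFrom ∅)⟩
  | compl t _ ih =>
    obtain ⟨D, hDC, hD, ht⟩ := ih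
    exact ⟨D, hDC, hD, ht.compl⟩
  | iUnion t _ ih =>
    choose D hDC hD ht using ih
    exact ⟨⋃ n, D n, iUnion_subset hDC, countable_iUnion hD,
      .iUnion fun n => generateFrom_mono (subset_iUnion D n) _ (ht n)⟩

theorem exists_countablyGenerated_measurableSet_prod {α β : Type*} [mα : MeasurableSpace α]
    [mβ : MeasurableSpace β] {s : Set (α × β)} (hs : MeasurableSet s) :
    ∃ m₁ ≤ mα, ∃ m₂ ≤ mβ, @CountablyGenerated α m₁ ∧ @CountablyGenerated β m₂ ∧
      MeasurableSet[m₁.prod m₂] s := by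
  rw [← generateFrom_prod, ← image_uncurry_prod] at hs
  obtain ⟨D, hDC, hD, hsD⟩ := exists_countable_subset_measurableSet_generateFrom hs
  obtain ⟨T, hT, hTD⟩ := SurjOn.exists_bijOn_subset hDC
  have hT_countable : T.Countable := hTD.mapsTo.countable_of_injOn hTD.injOn hD
  let m₁ := generateFrom (Prod.fst '' T)
  let m₂ := generateFrom (Prod.snd '' T)
  refine ⟨m₁, generateFrom_le ?_, m₂, generateFrom_le ?_,
    @CountablyGenerated.mk α m₁ ⟨_, hT_countable.image _, rfl⟩,
    @CountablyGenerated.mk β m₂ ⟨_, hT_countable.image _, rfl⟩, generateFrom_le ?_ s hsD⟩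
  · exact forall_mem_image.2 fun R hR => (hT hR).1
  · exact forall_mem_image.2 fun R hR => (hT hR).2
  · rw [← hTD.image_eq]
    exact forall_mem_image.2 fun R hR =>
      (measurableSet_generateFrom (mem_image_of_mem Prod.fst hR)).prod
        (measurableSet_generateFrom (mem_image_of_mem Prod.snd hR))

theorem countablySeparated_of_forall_mem_iff_swap_mem {α : Type*} [m : MeasurableSpace α]
    {A : Set (α × α)} (hA : MeasurableSet A)
    (hA_swap : ∀ x y, ((x, y) ∈ A ↔ (y, x) ∈ A) → x = y) : CountablySeparated α := by
  obtain ⟨m₁, hm₁, m₂, hm₂, hcg₁, hcg₂, hA'⟩ := exists_countablyGenerated_measurableSet_prod hA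
  let m' : MeasurableSpace α := m₁ ⊔ m₂
  have : @CountablyGenerated α m' := hcg₁.sup hcg₂
  have hAm' : MeasurableSet[m'.prod m'] A :=
    sup_le_sup (comap_mono le_sup_left) (comap_mono le_sup_right) _ hA'
  have : @SeparatesPoints α m' := by
    refine (@separatesPoints_iff α m').2 fun x y hxy => hA_swap x y ?_
    calc (x, y) ∈ A ↔ (y, y) ∈ A := hxy _ (@measurable_prodMk_right α α m' m' y _ hAm')
      _ ↔ (y, x) ∈ A := (hxy _ (@measurable_prodMk_left α α m' m' y _ hAm')).symm
  exact @CountablySeparated.mono α m' m inferInstance (sup_le hm₁ hm₂)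

theorem measurableEq_of_countablySeparated {α : Type*} [MeasurableSpace α]
    [CountablySeparated α] : MeasurableEq α where
  measurableSet_diagonal := by
    obtain ⟨f, hf, hf_inj⟩ := measurable_injection_nat_bool_of_countablySeparated α
    have h : diagonal α = {p | f p.1 = f p.2} := by
      ext
      simp [hf_inj.eq_iff]
    exact h ▸ measurableSet_eq_fun (hf.comp measurable_fst) (hf.comp measurable_snd)

theorem measurableSet_inter_diagonal_iff {α : Type*} [MeasurableSpace α] [MeasurableEq α]
    {S : Set (α × α)} :
    MeasurableSet (S ∩ diagonal α) ↔ MeasurableSet (Function.diag ⁻¹' S) := by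
  constructor <;> intro hS
  · have h : Function.diag ⁻¹' (S ∩ diagonal α) = Function.diag ⁻¹' S := by
      ext x
      simp [Function.diag]
    exact h ▸ measurable_diag hS
  · have h : S ∩ diagonal α = Prod.fst ⁻¹' (Function.diag ⁻¹' S) ∩ diagonal α := by
      ext ⟨x, y⟩
      simp +contextual [Function.diag]
    exact h ▸ (measurable_fst hS).inter measurableSet_diagonal

theorem countablySeparated_of_inter_compl_diagonal_eq_lt {α : Type*} [MeasurableSpace α]
    [LinearOrder α] {A : Set (α × α)} (hA : MeasurableSet A)
    (hA_lt : A ∩ (diagonal α)ᶜ = {p | p.1 < p.2}) : CountablySeparated α := by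
  have mem_iff_lt {x y : α} (hxy : x ≠ y) : (x, y) ∈ A ↔ x < y := by
    simpa [hxy] using Set.ext_iff.1 hA_lt (x, y)
  refine countablySeparated_of_forall_mem_iff_swap_mem hA fun x y hswap => ?_
  by_contra! hxy
  rw [mem_iff_lt hxy, mem_iff_lt hxy.symm] at hswap
  exact hxy.lt_or_gt.elim (fun h => h.not_gt (hswap.1 h)) fun h => h.not_gt (hswap.2 h)

theorem measurableSet_of_forall_exists_inter_compl_diagonal_eq {α : Type*} [MeasurableSpace α]
    [DiscreteMeasurableSpace α]
    (h : ∀ X ⊆ (diagonal α)ᶜ, ∃ A, MeasurableSet A ∧ A ∩ (diagonal α)ᶜ = X) (S : Set (α × α)) :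
    MeasurableSet S := by
  obtain ⟨_, -⟩ := exists_wellFoundedLT α
  obtain ⟨A, hA, hA_lt⟩ := h {p | p.1 < p.2} fun _ hp => hp.ne
  have : CountablySeparated α := countablySeparated_of_inter_compl_diagonal_eq_lt hA hA_lt
  have : MeasurableEq α := measurableEq_of_countablySeparated
  obtain ⟨B, hB, hBS⟩ := h (S ∩ (diagonal α)ᶜ) inter_subset_right
  rw [← inter_union_compl S (diagonal α), ← hBS]
  exact (measurableSet_inter_diagonal_iff.2 .of_discrete).union
    (hB.inter measurableSet_diagonal.compl)

theorem productSigma_eq_prod_top (Γ : Type*) : productSigma Γ = MeasurableSpace.prod ⊤ ⊤ := by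
  let _ : MeasurableSpace Γ := ⊤
  refine Eq.trans ?_ generateFrom_prod
  simp [productSigma, image2, eq_comm]

/-- Let `Ω` be the complement of the diagonal in `Γ × Γ`. Then `|Γ|` is a Kunen cardinal
iff the trace of the product σ-algebra `P(Γ) ⊗ P(Γ)` on `Ω` is the full power set of `Ω`. -/
theorem stmt11 (Γ : Type*) :
    IsKunen Γ ↔
      ∀ X ⊆ {p : Γ × Γ | p.1 ≠ p.2}, ∃ A : Set (Γ × Γ),
        @MeasurableSet _ (productSigma Γ) A ∧ A ∩ {p : Γ × Γ | p.1 ≠ p.2} = X := by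
  let _ : MeasurableSpace Γ := ⊤
  rw [IsKunen, productSigma_eq_prod_top]
  constructor
  · intro h X hX
    exact ⟨X, h ▸ measurableSet_top, inter_eq_left.2 hX⟩
  · intro h
    exact eq_top_iff.2 fun S _ => measurableSet_of_forall_exists_inter_compl_diagonal_eq h S
end

section
/- Let Γ be a set whose cardinality is a Kunen cardinal, let τ be an n-type, let (Y, Σ) be a measurable space, and let Φ : Γ^n → P(Y) be a multifunction satisfying property (S). If A, B ⊆ Γ^n are τ-separated, then Φ(A) and Φ(B) are Σ-separated. -/
/-- An `n`-type: a function from `{0,1}^n` to the closed nonempty intervals of `ℝ`. -/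
def IsNType {n : ℕ} (τ : (Fin n → Bool) → Set ℝ) : Prop :=
  ∀ p : Fin n → Bool, ∃ a b : ℝ, a ≤ b ∧ τ p = Set.Icc a b

/-- `γ, δ ∈ Γ^n` are `τ`-proximal: for every `U ⊆ Γ` (encoded by its characteristic
function `U : Γ → Bool`), the sets `τ(1_U(γ₁),…,1_U(γ_n))` and `τ(1_U(δ₁),…,1_U(δ_n))`
intersect. -/
def TauProximal {Γ : Type*} {n : ℕ} (τ : (Fin n → Bool) → Set ℝ)
    (γ δ : Fin n → Γ) : Prop :=
  ∀ U : Γ → Bool, (τ (fun i => U (γ i)) ∩ τ (fun i => U (δ i))).Nonempty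

/-- `A, B ⊆ Γ^n` are `τ`-separated: no `γ ∈ A` and `δ ∈ B` are `τ`-proximal. -/
def TauSeparated {Γ : Type*} {n : ℕ} (τ : (Fin n → Bool) → Set ℝ)
    (A B : Set (Fin n → Γ)) : Prop :=
  ∀ γ ∈ A, ∀ δ ∈ B, ¬ TauProximal τ γ δ

/-- `U, V ⊆ Y` are `Σ`-separated: there is `S ∈ Σ` with `U ⊆ S` and `V ∩ S = ∅`. -/
def SigmaSeparated {Y : Type*} (m : MeasurableSpace Y) (U V : Set Y) : Prop :=
  ∃ S : Set Y, @MeasurableSet _ m S ∧ U ⊆ S ∧ V ∩ S = ∅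

/-- The image `Φ(A) = ⋃_{γ ∈ A} Φ(γ)` of a set under a multifunction. -/
def MultiImage {Γ Y : Type*} {n : ℕ} (Φ : (Fin n → Γ) → Set Y)
    (A : Set (Fin n → Γ)) : Set Y :=
  ⋃ γ ∈ A, Φ γ

/-- Property (S) of a multifunction `Φ : Γ^n → P(Y)` with respect to a type `τ` and a
σ-algebra `Σ` on `Y`. -/
def PropertyS {Γ Y : Type*} {n : ℕ} (τ : (Fin n → Bool) → Set ℝ)
    (m : MeasurableSpace Y) (Φ : (Fin n → Γ) → Set Y) : Prop :=
  ∀ (U : Γ → Bool) (I : Set ℝ), IsClosed I →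
    SigmaSeparated m
      (MultiImage Φ {γ | τ (fun i => U (γ i)) ⊆ I})
      (MultiImage Φ {γ | τ (fun i => U (γ i)) ∩ I = ∅})

/-!
Kunen's hypothesis passes from `Γ²` to all finite powers of `Γ`, because an infinite `Γ` contains
copies of its own powers. Hence countably many sets of finite tuples lie in the powers of one
countably generated σ-algebra on `Γ`; in other words an injective code `f : Γ → 2^ℕ` makes all of
them traces of Borel sets.

Whether `γ` and `δ` are `τ`-proximal depends only on the equality pattern of their `2n` coordinates.
For a proximal pattern, `τ`-separation of `A` and `B` says that the values taken by `A` on the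
coordinates shared with the second tuple avoid those taken by `B`. Coding these sets of values for
each of the finitely many patterns yields Borel sets `A' ⊇ f(A)` and `B' ⊇ f(B)` that are still
`τ`-separated in `2^ℕ`.

In `2^ℕ`, proximality is tested by the countably many clopen sets. Property (S) for these supplies
countably many sets in `Σ`, and the itinerary of `y ∈ Φ(γ)` through them is related to `f(γ)` by a
fixed Borel relation. The images of `A'` and `B'` under this relation are disjoint analytic sets,
so Lusin's separation theorem applies.
-/

open MeasurableSpace Function
open TopologicalSpace (Clopens)
open scoped MeasureTheory

section DiscretePowers

theorem discreteMeasurableSpace_of_injective {α β : Type*} [MeasurableSpace α] [MeasurableSpace β]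
    [DiscreteMeasurableSpace β] {g : α → β} (hg : Measurable g) (hinj : Injective g) :
    DiscreteMeasurableSpace α where
  forall_measurableSet s := by
    rw [← hinj.preimage_image s]
    exact hg .of_discrete

variable {Γ : Type*} [MeasurableSpace Γ]

theorem IsKunen.discreteMeasurableSpace_prod [DiscreteMeasurableSpace Γ] (hΓ : IsKunen Γ) :
    DiscreteMeasurableSpace (Γ × Γ) where
  forall_measurableSet s := by
    have productSigma_le : productSigma Γ ≤ Prod.instMeasurableSpace := by
      refine generateFrom_le ?_
      rintro _ ⟨A, B, rfl⟩
      exact MeasurableSet.of_discrete.prod .of_discrete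
    refine productSigma_le s ?_
    rw [show productSigma Γ = ⊤ from hΓ]
    exact measurableSet_top

theorem discreteMeasurableSpace_fin_pi [Infinite Γ] [DiscreteMeasurableSpace (Γ × Γ)] (k : ℕ) :
    DiscreteMeasurableSpace (Fin k → Γ) := by
  induction k with
  | zero => exact ⟨fun s => Subsingleton.measurableSet⟩
  | succ k ih =>
    obtain ⟨j⟩ : Nonempty ((Fin k → Γ) ↪ Γ) := by
      rw [← Cardinal.le_def]
      simpa using Cardinal.power_nat_le (n := k) (Cardinal.aleph0_le_mk Γ)
    have hj : Measurable (Prod.map id j : Γ × (Fin k → Γ) → Γ × Γ) :=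
      measurable_id.prodMap .of_discrete
    have hinj : Injective (Prod.map id j : Γ × (Fin k → Γ) → Γ × Γ) :=
      injective_id.prodMap j.injective
    let e := MeasurableEquiv.piFinSuccAbove (fun _ : Fin (k + 1) => Γ) 0
    exact discreteMeasurableSpace_of_injective (hj.comp e.measurable) (hinj.comp e.injective)

theorem IsKunen.discreteMeasurableSpace_pi [DiscreteMeasurableSpace Γ] (hΓ : IsKunen Γ)
    (ι : Type*) [Finite ι] : DiscreteMeasurableSpace (ι → Γ) := by
  rcases finite_or_infinite Γ with _ | _
  · infer_instance
  · have := hΓ.discreteMeasurableSpace_prod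
    obtain ⟨k, ⟨e⟩⟩ := Finite.exists_equiv_fin ι
    have := discreteMeasurableSpace_fin_pi (Γ := Γ) k
    let e' := MeasurableEquiv.piCongrLeft (fun _ : Fin k => Γ) e
    exact discreteMeasurableSpace_of_injective e'.measurable e'.injective

end DiscretePowers

section CountablyGenerated

/-- The product σ-algebra on `Γ^ι` of copies of a σ-algebra `m` on `Γ`. It is an explicit function
of `m`, since the arguments below vary `m`. -/
abbrev powerSigma {Γ : Type*} (ι : Type*) (m : MeasurableSpace Γ) : MeasurableSpace (ι → Γ) :=
  @MeasurableSpace.pi ι (fun _ => Γ) fun _ => m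

variable {Γ ι κ : Type*}

theorem IsKunen.measurableSet_powerSigma_top [Finite ι] (hΓ : IsKunen Γ) (S : Set (ι → Γ)) :
    MeasurableSet[powerSigma ι ⊤] S :=
  letI : MeasurableSpace Γ := ⊤
  (hΓ.discreteMeasurableSpace_pi ι).forall_measurableSet S

theorem powerSigma_mono : Monotone (powerSigma (Γ := Γ) ι) :=
  fun _ _ h => iSup_mono fun _ => comap_mono h

theorem powerSigma_comap {X : Type*} (f : Γ → X) (m : MeasurableSpace X) :
    powerSigma ι (m.comap f) = (powerSigma ι m).comap (f ∘ ·) := by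
  simp only [powerSigma, MeasurableSpace.pi, comap_iSup, comap_comp]
  rfl

theorem countablyGenerated_generateFrom {b : Set (Set Γ)} (hb : b.Countable) :
    @CountablyGenerated Γ (generateFrom b) :=
  @CountablyGenerated.mk Γ (generateFrom b) ⟨b, hb, rfl⟩

theorem countablyGenerated_iSup [Countable κ] {m : κ → MeasurableSpace Γ}
    (hm : ∀ k, @CountablyGenerated Γ (m k)) : @CountablyGenerated Γ (⨆ k, m k) := by
  choose b hb hmb using fun k => (hm k).isCountablyGenerated
  rw [iSup_congr hmb, iSup_generateFrom]
  exact countablyGenerated_generateFrom (Set.countable_iUnion hb)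

theorem exists_countablyGenerated_measurableSet_powerSigma {m₀ : MeasurableSpace Γ}
    {S : Set (ι → Γ)} (hS : MeasurableSet[powerSigma ι m₀] S) :
    ∃ m : MeasurableSpace Γ, @CountablyGenerated Γ m ∧ MeasurableSet[powerSigma ι m] S := by
  rw [powerSigma, pi_eq_generateFrom_projections] at hS
  induction S, hS using generateFrom_induction with
  | hC S hS _ =>
    obtain ⟨i, T, -, rfl⟩ := hS
    refine ⟨generateFrom {T}, countablyGenerated_generateFrom (Set.countable_singleton T), ?_⟩
    exact @measurable_pi_apply ι (fun _ => Γ) (fun _ => generateFrom {T}) i T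
      (measurableSet_generateFrom rfl)
  | empty => exact ⟨_, countablyGenerated_generateFrom Set.countable_empty,
      @MeasurableSet.empty _ (powerSigma ι _)⟩
  | compl S _ ih =>
    obtain ⟨m, hm, hS⟩ := ih
    exact ⟨m, hm, hS.compl⟩
  | iUnion S _ ih =>
    choose m hm hS using ih
    exact ⟨⨆ k, m k, countablyGenerated_iSup hm,
      MeasurableSet.iUnion fun k => powerSigma_mono (le_iSup m k) _ (hS k)⟩

theorem exists_eq_comap_nat_bool (m : MeasurableSpace Γ) [CountablyGenerated Γ] :
    ∃ f : Γ → ℕ → Bool, m = MeasurableSpace.pi.comap f := by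
  refine ⟨mapNatBool Γ, le_antisymm ?_ (measurable_mapNatBool Γ).comap_le⟩
  conv_lhs => rw [← generateFrom_natGeneratingSequence Γ]
  refine generateFrom_le ?_
  rintro _ ⟨n, rfl⟩
  refine ⟨eval n ⁻¹' {true}, measurable_pi_apply n (measurableSet_singleton true), ?_⟩
  ext x
  simp [mapNatBool]

theorem injective_of_measurableSet_diagonal {X : Type*} {m : MeasurableSpace X} {f : Γ → X}
    (h : MeasurableSet[powerSigma (Fin 2) (m.comap f)] {γ | γ 0 = γ 1}) : Injective f := by
  rw [powerSigma_comap] at h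
  obtain ⟨C, -, hC⟩ := h
  intro x y hxy
  have hxx : ![x, x] ∈ (f ∘ ·) ⁻¹' C := by simp [hC]
  have same_code : f ∘ ![x, x] = f ∘ ![x, y] := by
    ext i : 1
    fin_cases i
    exacts [rfl, hxy]
  have hxy' : ![x, y] ∈ (f ∘ ·) ⁻¹' C := by
    rw [Set.mem_preimage, ← same_code]
    exact hxx
  simpa [hC] using hxy'

theorem IsKunen.exists_injective_code [Countable κ] (hΓ : IsKunen Γ) {ι : κ → Type*}
    [∀ k, Finite (ι k)] (S : ∀ k, Set (ι k → Γ)) :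
    ∃ f : Γ → ℕ → Bool, Injective f ∧
      ∀ k, ∃ C : Set (ι k → ℕ → Bool), MeasurableSet C ∧ (f ∘ ·) ⁻¹' C = S k := by
  choose m hm hS using fun k => exists_countablyGenerated_measurableSet_powerSigma
    (hΓ.measurableSet_powerSigma_top (S k))
  obtain ⟨m', hm', hdiag⟩ := exists_countablyGenerated_measurableSet_powerSigma
    (hΓ.measurableSet_powerSigma_top {γ : Fin 2 → Γ | γ 0 = γ 1})
  have : @CountablyGenerated Γ ((⨆ k, m k) ⊔ m') := (countablyGenerated_iSup hm).sup hm'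
  obtain ⟨f, hf⟩ := exists_eq_comap_nat_bool ((⨆ k, m k) ⊔ m')
  refine ⟨f, injective_of_measurableSet_diagonal (m := MeasurableSpace.pi) ?_, fun k => ?_⟩
  · rw [← hf]
    exact powerSigma_mono le_sup_right _ hdiag
  · have hSk : MeasurableSet[powerSigma (ι k) ((⨆ k, m k) ⊔ m')] (S k) :=
      powerSigma_mono ((le_iSup m k).trans le_sup_left) _ (hS k)
    rwa [hf, powerSigma_comap] at hSk

end CountablyGenerated

section EqualityPatterns

variable {Γ Γ' : Type*} {n : ℕ} {τ : (Fin n → Bool) → Set ℝ}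

theorem TauProximal.of_factorsThrough {γ δ : Fin n → Γ} {γ' δ' : Fin n → Γ'}
    (h : TauProximal τ γ δ) (hfac : (Sum.elim γ' δ').FactorsThrough (Sum.elim γ δ)) :
    TauProximal τ γ' δ' := by
  intro U
  obtain ⟨W, hW⟩ := (factorsThrough_iff (U ∘ Sum.elim γ' δ')).1 fun _ _ hab =>
    congrArg U (hfac hab)
  have hγ (i : Fin n) : U (γ' i) = W (γ i) := congrFun hW (.inl i)
  have hδ (i : Fin n) : U (δ' i) = W (δ i) := congrFun hW (.inr i)
  simpa only [hγ, hδ] using h W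

variable {ι Q : Type*}

theorem factorsThrough_sumElim {x y : ι → Γ} {e : ι ⊕ ι → Q}
    (hx : x.FactorsThrough (e ∘ .inl)) (hy : y.FactorsThrough (e ∘ .inr))
    (hxy : ∀ i j, e (.inl i) = e (.inr j) → x i = y j) : (Sum.elim x y).FactorsThrough e := by
  rintro (i | i) (j | j) hij
  exacts [hx hij, hxy i j hij, (hxy j i hij.symm).symm, hy hij]

theorem measurableSet_factorsThrough {X : Type*} [MeasurableSpace X] [MeasurableEq X]
    [Countable ι] (e : ι → Q) : MeasurableSet {x : ι → X | x.FactorsThrough e} := by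
  simp only [FactorsThrough, Set.ofPred_forall]
  exact .iInter fun i => .iInter fun j => .iInter fun _ =>
    measurableSet_eq_fun (measurable_pi_apply i) (measurable_pi_apply j)

/-- Pairs of a coordinate of the first tuple and one of the second that the equality pattern `e`
of two tuples identifies. -/
abbrev SharedIndex (e : ι ⊕ ι → Q) : Type _ := {p : ι × ι // e (.inl p.1) = e (.inr p.2)}

/-- The values on the shared coordinates of those tuples in `A` that can be the first tuple in a
pair with equality pattern `e`. -/
def sharedValues (e : ι ⊕ ι → Q) (A : Set (ι → Γ)) : Set (SharedIndex e → Γ) :=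
  (fun γ p => γ p.1.1) '' {γ ∈ A | γ.FactorsThrough (e ∘ .inl)}

theorem TauSeparated.notMem_sharedValues {A B : Set (Fin n → Γ)} (hAB : TauSeparated τ A B)
    {e : Fin n ⊕ Fin n → Q} (he : TauProximal τ (e ∘ .inl) (e ∘ .inr)) {δ : Fin n → Γ}
    (hδ : δ ∈ B) (hδe : δ.FactorsThrough (e ∘ .inr)) :
    (fun p => δ p.1.2) ∉ sharedValues e A := by
  rintro ⟨γ, ⟨hγ, hγe⟩, hγδ⟩
  refine hAB γ hγ δ hδ (he.of_factorsThrough ?_)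
  rw [Sum.elim_comp_inl_inr]
  exact factorsThrough_sumElim hγe hδe fun i j hij => congrFun hγδ ⟨(i, j), hij⟩

theorem TauSeparated.exists_measurable_hulls_of_pattern {A B : Set (Fin n → Γ)}
    (hAB : TauSeparated τ A B) {e : Fin n ⊕ Fin n → Q}
    (he : TauProximal τ (e ∘ .inl) (e ∘ .inr)) {X : Type*} [MeasurableSpace X] [MeasurableEq X]
    {f : Γ → X} (hf : Injective f) {C : Set (SharedIndex e → X)} (hC : MeasurableSet C)
    (hCA : (f ∘ ·) ⁻¹' C = sharedValues e A) :
    ∃ A' B' : Set (Fin n → X), MeasurableSet A' ∧ MeasurableSet B' ∧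
      A ⊆ (f ∘ ·) ⁻¹' A' ∧ B ⊆ (f ∘ ·) ⁻¹' B' ∧
      ∀ x ∈ A', ∀ y ∈ B', ¬ (Sum.elim x y).FactorsThrough e := by
  have factors_of_code {γ : Fin n → Γ} {d : Fin n → Q} (h : (f ∘ γ).FactorsThrough d) :
      γ.FactorsThrough d := fun _ _ hij => hf (h hij)
  refine ⟨{x | x.FactorsThrough (e ∘ .inl) → (fun p => x p.1.1) ∈ C},
    {y | y.FactorsThrough (e ∘ .inr) → (fun p => y p.1.2) ∉ C}, ?_, ?_, ?_, ?_, ?_⟩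
  · exact (measurableSet_factorsThrough _).imp
      (measurable_pi_lambda _ (fun p => measurable_pi_apply p.1.1) hC)
  · exact (measurableSet_factorsThrough _).imp
      (measurable_pi_lambda _ (fun p => measurable_pi_apply p.1.2) hC).compl
  · intro γ hγ hγe
    change (fun p : SharedIndex e => γ p.1.1) ∈ (f ∘ ·) ⁻¹' C
    rw [hCA]
    exact ⟨γ, ⟨hγ, factors_of_code hγe⟩, rfl⟩
  · intro δ hδ hδe
    change (fun p : SharedIndex e => δ p.1.2) ∉ (f ∘ ·) ⁻¹' C
    rw [hCA]
    exact hAB.notMem_sharedValues he hδ (factors_of_code hδe)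
  · intro x hx y hy hxy
    have agree : (fun p : SharedIndex e => x p.1.1) = fun p => y p.1.2 :=
      funext fun p => hxy p.2
    refine hy (fun i j hij => hxy hij) ?_
    rw [← agree]
    exact hx fun i j hij => hxy hij

theorem finite_setoid (α : Type*) [Finite α] : Finite (Setoid α) :=
  Finite.of_injective (fun s a b => s a b) fun _ _ h => Setoid.ext fun a b =>
    iff_of_eq (congrFun₂ h a b)

theorem IsKunen.exists_measurable_hulls (hΓ : IsKunen Γ) {A B : Set (Fin n → Γ)}
    (hAB : TauSeparated τ A B) :
    ∃ (f : Γ → ℕ → Bool) (A' B' : Set (Fin n → ℕ → Bool)), MeasurableSet A' ∧ MeasurableSet B' ∧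
      A ⊆ (f ∘ ·) ⁻¹' A' ∧ B ⊆ (f ∘ ·) ⁻¹' B' ∧ TauSeparated τ A' B' := by
  let ProximalPattern : Type := {s : Setoid (Fin n ⊕ Fin n) //
    TauProximal τ (Quotient.mk s ∘ .inl) (Quotient.mk s ∘ .inr)}
  have := finite_setoid (Fin n ⊕ Fin n)
  have : Finite ProximalPattern := Subtype.finite
  obtain ⟨f, hf, hcode⟩ := hΓ.exists_injective_code
    fun s : ProximalPattern => sharedValues (Quotient.mk s.1) A
  choose C hC hCA using hcode
  choose A' B' hA' hB' hAA' hBB' hpattern using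
    fun s => hAB.exists_measurable_hulls_of_pattern s.2 hf (hC s) (hCA s)
  refine ⟨f, ⋂ s, A' s, ⋂ s, B' s, .iInter hA', .iInter hB',
    fun γ hγ => Set.mem_iInter.2 fun s => hAA' s hγ,
    fun δ hδ => Set.mem_iInter.2 fun s => hBB' s hδ, fun x hx y hy hxy => ?_⟩
  let s : Setoid (Fin n ⊕ Fin n) := Setoid.ker (Sum.elim x y)
  have hs : TauProximal τ (Quotient.mk s ∘ .inl) (Quotient.mk s ∘ .inr) := by
    refine hxy.of_factorsThrough ?_
    rw [Sum.elim_comp_inl_inr]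
    exact fun _ _ hab => Quotient.sound hab
  exact hpattern ⟨s, hs⟩ x (Set.mem_iInter.1 hx _) y (Set.mem_iInter.1 hy _)
    fun _ _ hab => Quotient.exact hab

end EqualityPatterns

section ClopenTests

variable {X : Type*} [TopologicalSpace X] {n : ℕ} {τ : (Fin n → Bool) → Set ℝ}

theorem exists_clopens_eqOn_boolIndicator [CompactSpace X] [T2Space X] [TotallyDisconnectedSpace X]
    {s : Set X} (hs : s.Finite) (U : X → Bool) :
    ∃ V : Clopens X, s.EqOn (V : Set X).boolIndicator U := by
  have closed_true : IsClosed (s ∩ U ⁻¹' {true}) := (hs.subset Set.inter_subset_left).isClosed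
  have closed_false : IsClosed (s ∩ U ⁻¹' {false}) := (hs.subset Set.inter_subset_left).isClosed
  obtain ⟨V, hV, htrue, hfalse⟩ :=
    exists_clopen_of_closed_subset_open closed_true closed_false.isOpen_compl
      fun x hx hx' => by simp_all
  refine ⟨⟨V, hV⟩, fun x hx => ?_⟩
  cases hU : U x with
  | true => exact (Set.mem_iff_boolIndicator V x).1 (htrue ⟨hx, hU⟩)
  | false => exact (Set.notMem_iff_boolIndicator V x).1 fun hxV => hfalse hxV ⟨hx, hU⟩

theorem TauProximal.of_clopens [CompactSpace X] [T2Space X] [TotallyDisconnectedSpace X]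
    {x y : Fin n → X}
    (h : ∀ V : Clopens X, (τ (fun i => (V : Set X).boolIndicator (x i)) ∩
      τ (fun i => (V : Set X).boolIndicator (y i))).Nonempty) : TauProximal τ x y := by
  intro U
  obtain ⟨V, hV⟩ := exists_clopens_eqOn_boolIndicator
    ((Set.finite_range x).union (Set.finite_range y)) U
  have hx (i : Fin n) := hV (.inl (Set.mem_range_self (f := x) i))
  have hy (i : Fin n) := hV (.inr (Set.mem_range_self (f := y) i))
  simpa only [hx, hy] using h V

/-- The pairs `(x, z)` such that `z` may be the itinerary of a point of `Φ(γ)`, where `x` codes `γ`,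
through the sets that property (S) provides for clopen `V` and closed `τ p`: the `(V, p)`-th
coordinate of `z` tells whether the point lies in the set for `V` and `τ p`. -/
def itineraryRel (τ : (Fin n → Bool) → Set ℝ) :
    Set ((Fin n → X) × (Clopens X × (Fin n → Bool) → Prop)) :=
  {w | ∀ k, (τ (fun i => (k.1 : Set X).boolIndicator (w.1 i)) ⊆ τ k.2 → w.2 k) ∧
    (τ (fun i => (k.1 : Set X).boolIndicator (w.1 i)) ∩ τ k.2 = ∅ → ¬ w.2 k)}

theorem measurableSet_itineraryRel [MeasurableSpace X] [OpensMeasurableSpace X]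
    [Countable (Clopens X)] (τ : (Fin n → Bool) → Set ℝ) :
    MeasurableSet (itineraryRel (X := X) τ) := by
  simp only [itineraryRel, Set.ofPred_forall]
  refine .iInter fun k => ?_
  have measurable_test : Measurable fun w : (Fin n → X) × (Clopens X × (Fin n → Bool) → Prop) =>
      ((fun i => (k.1 : Set X).boolIndicator (w.1 i) : Fin n → Bool), w.2 k) := by
    have : Measurable (k.1 : Set X).boolIndicator :=
      ((continuous_boolIndicator_iff_isClopen _).2 k.1.isClopen).measurable
    fun_prop
  exact measurable_test (t := {v | (τ v.1 ⊆ τ k.2 → v.2) ∧ (τ v.1 ∩ τ k.2 = ∅ → ¬ v.2)})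
    .of_discrete

theorem tauProximal_of_mem_itineraryRel [CompactSpace X] [T2Space X] [TotallyDisconnectedSpace X]
    {x y : Fin n → X} {z : Clopens X × (Fin n → Bool) → Prop}
    (hx : (x, z) ∈ itineraryRel τ) (hy : (y, z) ∈ itineraryRel τ) : TauProximal τ x y := by
  refine .of_clopens fun V => ?_
  by_contra hempty
  rw [Set.not_nonempty_iff_eq_empty, Set.inter_comm] at hempty
  let k : Clopens X × (Fin n → Bool) := (V, fun i => (V : Set X).boolIndicator (x i))
  exact (hy k).2 hempty ((hx k).1 subset_rfl)

end ClopenTests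

section Separation

variable {Γ Y : Type*} {n : ℕ} {m : MeasurableSpace Y}

theorem SigmaSeparated.mono {U U' V V' : Set Y} (h : SigmaSeparated m U' V') (hU : U ⊆ U')
    (hV : V ⊆ V') : SigmaSeparated m U V := by
  obtain ⟨S, hS, hUS, hVS⟩ := h
  exact ⟨S, hS, hU.trans hUS, Set.subset_eq_empty (Set.inter_subset_inter_left S hV) hVS⟩

theorem sigmaSeparated_of_measurableSet_rel {X Z : Type*} [MeasurableSpace X]
    [StandardBorelSpace X] [MeasurableSpace Z] [StandardBorelSpace Z] {R : Set (X × Z)}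
    (hR : MeasurableSet R) {A B : Set X} (hA : MeasurableSet A) (hB : MeasurableSet B)
    (hAB : ∀ x ∈ A, ∀ y ∈ B, ∀ z, (x, z) ∈ R → (y, z) ∉ R) {t : Y → Z} (ht : Measurable t) :
    SigmaSeparated m {v | ∃ x ∈ A, (x, t v) ∈ R} {v | ∃ x ∈ B, (x, t v) ∈ R} := by
  let := upgradeStandardBorel Z
  have analytic_image {D : Set X} (hD : MeasurableSet D) :
      MeasureTheory.AnalyticSet (Prod.snd '' (R ∩ Prod.fst ⁻¹' D)) :=
    (hR.inter (measurable_fst hD)).analyticSet_image measurable_snd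
  have disjoint_images :
      Disjoint (Prod.snd '' (R ∩ Prod.fst ⁻¹' A)) (Prod.snd '' (R ∩ Prod.fst ⁻¹' B)) := by
    rw [Set.disjoint_left]
    rintro _ ⟨⟨x, z⟩, ⟨hxR, hxA⟩, rfl⟩ ⟨⟨y, _⟩, ⟨hyR, hyB⟩, rfl⟩
    exact hAB x hxA y hyB _ hxR hyR
  obtain ⟨S, hAS, hBS, hS⟩ :=
    (analytic_image hA).measurablySeparable (analytic_image hB) disjoint_images
  refine ⟨t ⁻¹' S, ht hS, ?_, ?_⟩
  · rintro v ⟨x, hx, hxv⟩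
    exact hAS ⟨(x, t v), ⟨hxv, hx⟩, rfl⟩
  · rw [← Set.disjoint_iff_inter_eq_empty, Set.disjoint_left]
    rintro v ⟨x, hx, hxv⟩ hvS
    exact Set.disjoint_left.1 hBS ⟨(x, t v), ⟨hxv, hx⟩, rfl⟩ hvS

theorem PropertyS.exists_itinerary {τ : (Fin n → Bool) → Set ℝ} {Φ : (Fin n → Γ) → Set Y}
    (hS : PropertyS τ m Φ) (hτ : ∀ p, IsClosed (τ p)) {X : Type*} [TopologicalSpace X]
    (f : Γ → X) :
    ∃ t : Y → Clopens X × (Fin n → Bool) → Prop, Measurable t ∧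
      ∀ γ, ∀ v ∈ Φ γ, (f ∘ γ, t v) ∈ itineraryRel τ := by
  choose S hSm hin hout using fun k : Clopens X × (Fin n → Bool) =>
    hS (fun a => (k.1 : Set X).boolIndicator (f a)) (τ k.2) (hτ k.2)
  refine ⟨fun v k => v ∈ S k, measurable_pi_lambda _ fun k => measurable_mem.2 (hSm k),
    fun γ v hv k => ⟨fun hsub => hin k (Set.mem_biUnion (x := γ) hsub hv), fun hempty hvS => ?_⟩⟩
  exact (hout k).subset ⟨Set.mem_biUnion (x := γ) hempty hv, hvS⟩

end Separation

theorem IsNType.isClosed {n : ℕ} {τ : (Fin n → Bool) → Set ℝ} (hτ : IsNType τ)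
    (p : Fin n → Bool) : IsClosed (τ p) := by
  obtain ⟨a, b, -, hab⟩ := hτ p
  rw [hab]
  exact isClosed_Icc

theorem stmt14_general {Γ : Type*} (hΓ : IsKunen Γ) {n : ℕ} {τ : (Fin n → Bool) → Set ℝ}
    (hτ : ∀ p, IsClosed (τ p)) {Y : Type*} {m : MeasurableSpace Y} {Φ : (Fin n → Γ) → Set Y}
    (hS : PropertyS τ m Φ) {A B : Set (Fin n → Γ)} (hAB : TauSeparated τ A B) :
    SigmaSeparated m (MultiImage Φ A) (MultiImage Φ B) := by
  obtain ⟨f, A', B', hA', hB', hAA', hBB', hsep⟩ := hΓ.exists_measurable_hulls hAB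
  obtain ⟨t, ht, hΦ⟩ := hS.exists_itinerary hτ f
  have : Countable (Clopens (ℕ → Bool)) := Clopens.countable_iff_secondCountable.2 inferInstance
  refine (sigmaSeparated_of_measurableSet_rel (measurableSet_itineraryRel τ) hA' hB'
    (fun x hx y hy _ hxz hyz => hsep x hx y hy (tauProximal_of_mem_itineraryRel hxz hyz))
    ht).mono ?_ ?_
  · exact Set.iUnion₂_subset fun γ hγ v hv => ⟨f ∘ γ, hAA' hγ, hΦ γ v hv⟩
  · exact Set.iUnion₂_subset fun δ hδ v hv => ⟨f ∘ δ, hBB' hδ, hΦ δ v hv⟩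

/-- If `|Γ|` is a Kunen cardinal, `τ` is an `n`-type and `Φ` satisfies property (S),
then `Φ` maps `τ`-separated sets to `Σ`-separated sets. -/
theorem stmt14 (Γ : Type*) (hΓ : IsKunen Γ) (n : ℕ)
    (τ : (Fin n → Bool) → Set ℝ) (hτ : IsNType τ)
    (Y : Type*) (m : MeasurableSpace Y) (Φ : (Fin n → Γ) → Set Y)
    (hS : PropertyS τ m Φ)
    (A B : Set (Fin n → Γ)) (hAB : TauSeparated τ A B) :
    SigmaSeparated m (MultiImage Φ A) (MultiImage Φ B) := by
  exact stmt14_general hΓ hτ.isClosed hS hAB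
end
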